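/- arXiv:1306.6224 — 2 statements merged into one kernel-verified Lean document; each statement's English description precedes it below -/
import Mathlib

section
/- Infinitary rewriting is contained in bi-infinite rewriting: →→→ ⊆ ∞→∞, where →→→ := μx.νy.((→ε ∪ ↓x)* ∘ ↓y) and ∞→∞ := νy.((→ε ∪ ↓y)*). -/
open Relation

/-- The polynomial functor of a signature. -/
def Sig {F : Type} (ar : F → ℕ) (X : Type) : PFunctor.{0} :=
  ⟨X ⊕ F, fun a => match a with
    | Sum.inl _ => Empty
    | Sum.inr f => Fin (ar f)⟩

/-- Possibly infinite terms: the final coalgebra (M-type) of the signature functor. -/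
abbrev Tm {F : Type} (ar : F → ℕ) (X : Type) : Type := (Sig ar X).M

/-- The lifting `↓R` of a relation on terms. -/
def lift {F : Type} (ar : F → ℕ) (X : Type) (R : Tm ar X → Tm ar X → Prop) :
    Tm ar X → Tm ar X → Prop := fun s t =>
  s = t ∨ ∃ (f : F) (sa ta : Fin (ar f) → Tm ar X),
    s = PFunctor.M.mk ⟨Sum.inr f, sa⟩ ∧ t = PFunctor.M.mk ⟨Sum.inr f, ta⟩ ∧
    ∀ i, R (sa i) (ta i)

/-- Knaster–Tarski least fixed point. -/
def mu {L : Type*} [CompleteLattice L] (f : L → L) : L := sInf {x | f x ≤ x}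

/-- Knaster–Tarski greatest fixed point. -/
def nu {L : Type*} [CompleteLattice L] (f : L → L) : L := sSup {x | x ≤ f x}

/-- The infinitary rewrite relation `→→→ := μx.νy.((→ε ∪ ↓x)* ∘ ↓y)`. -/
def ired {F X : Type} (ar : F → ℕ) (root : Tm ar X → Tm ar X → Prop) :
    Tm ar X → Tm ar X → Prop :=
  mu (fun x => nu (fun y => Relation.Comp (ReflTransGen (root ⊔ lift ar X x)) (lift ar X y)))

/-- The bi-infinite rewrite relation `∞→∞ := νy.((→ε ∪ ↓y)*)`. -/
def biInf {F X : Type} (ar : F → ℕ) (root : Tm ar X → Tm ar X → Prop) :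
    Tm ar X → Tm ar X → Prop :=
  nu (fun y => ReflTransGen (root ⊔ lift ar X y))

section FixedPoints

variable {L : Type*} [CompleteLattice L]

theorem nu_le_map_of_nu_le {H : L → L} (hH : Monotone H) {x : L} (hx : nu H ≤ x) : nu H ≤ H x :=
  OrderHom.gfp_le_map ⟨H, hH⟩ hx

/-- Coinduction in which the next unfolding may already appeal to `nu H`: the post-fixed point
is `nu H ⊔ y` rather than `y` itself. -/
theorem le_nu_of_le_map_nu_sup {H : L → L} (hH : Monotone H) {y : L} (hy : y ≤ H (nu H ⊔ y)) :
    y ≤ nu H :=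
  have sup_le_map : nu H ⊔ y ≤ H (nu H ⊔ y) := sup_le (nu_le_map_of_nu_le hH le_sup_left) hy
  le_sup_right.trans (le_sSup sup_le_map)

theorem mu_nu_le_nu {G : L → L → L} {H : L → L} (hH : Monotone H)
    (hGH : ∀ x y, G x y ≤ H (x ⊔ y)) : mu (fun x => nu (G x)) ≤ nu H := by
  have nu_isPrefixed : nu (G (nu H)) ≤ nu H := sSup_le fun y hy =>
    le_nu_of_le_map_nu_sup hH <| calc
      y ≤ G (nu H) y := hy
      _ ≤ H (nu H ⊔ y) := hGH _ _
  exact sInf_le nu_isPrefixed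

end FixedPoints

theorem comp_reflTransGen_le {α : Type*} {R S T : α → α → Prop} (hRT : R ≤ T) (hST : S ≤ T) :
    Relation.Comp (ReflTransGen R) S ≤ ReflTransGen T := by
  rintro s t ⟨u, hsu, hut⟩
  exact (ReflTransGen.mono hRT s u hsu).tail (hST u t hut)

theorem lift_monotone {F : Type} (ar : F → ℕ) (X : Type) : Monotone (lift ar X) := by
  rintro R S hRS s t (rfl | ⟨f, sa, ta, hs, ht, hargs⟩)
  · exact Or.inl rfl
  · exact Or.inr ⟨f, sa, ta, hs, ht, fun i => hRS _ _ (hargs i)⟩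

theorem ired_le_biInf_general {α : Type*} (root : α → α → Prop)
    {Λ : (α → α → Prop) → α → α → Prop} (hΛ : Monotone Λ) :
    mu (fun x => nu (fun y => Relation.Comp (ReflTransGen (root ⊔ Λ x)) (Λ y))) ≤
      nu (fun y => ReflTransGen (root ⊔ Λ y)) := by
  have step_mono : Monotone fun y => root ⊔ Λ y := fun _ _ hxy => sup_le_sup_left (hΛ hxy) root
  refine mu_nu_le_nu (fun _ _ hxy => ReflTransGen.mono (step_mono hxy)) fun x y => ?_
  have left_le : root ⊔ Λ x ≤ root ⊔ Λ (x ⊔ y) := step_mono le_sup_left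
  have right_le : Λ y ≤ root ⊔ Λ (x ⊔ y) := le_sup_of_le_right (hΛ le_sup_right)
  exact comp_reflTransGen_le left_le right_le

/-- Infinitary rewriting is contained in bi-infinite rewriting: `→→→ ⊆ ∞→∞`. -/
theorem ired_le_biInf {F X : Type} (ar : F → ℕ) (root : Tm ar X → Tm ar X → Prop) :
    ired ar root ≤ biInf ar root :=
  ired_le_biInf_general root (lift_monotone ar X)
end

section
/- Infinitary conversion is contained in infinitary equational reasoning: ((→→→)⁻¹ ∘ →→→)* ⊆ =^∞, where →→→ := μx.νy.((→ε ∪ ↓x)* ∘ ↓y) and =^∞ := νy.((→ε⁻¹ ∪ →ε ∪ ↓y)*). -/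
open Relation

/-- Infinitary equational reasoning: `=^∞ := νy.((→ε⁻¹ ∪ →ε ∪ ↓y)*)`. -/
def eqInf {F X : Type} (ar : F → ℕ) (root : Tm ar X → Tm ar X → Prop) :
    Tm ar X → Tm ar X → Prop :=
  nu (fun y => ReflTransGen (flip root ⊔ root ⊔ lift ar X y))

/-!
`=^∞` is an equivalence relation: it is a fixed point of a reflexive–transitive closure, and its
converse is a post-fixed point of the same map because single steps are closed under converse. So
only `→→→ ⊆ =^∞` is at stake. Since `→→→` is a least fixed point, it suffices that `=^∞` is a
pre-fixed point, that is, every `N ⊆ (→ε ∪ ↓=^∞)* ∘ ↓N` lies in `=^∞`. This is coinduction up to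
`=^∞`: the relation `N ∪ =^∞` is a post-fixed point of the map defining `=^∞`.
-/

section FixedPoints

variable {L : Type*} [CompleteLattice L] {f : L → L} {a : L}

theorem mu_le (h : f a ≤ a) : mu f ≤ a :=
  sInf_le h

theorem le_nu (h : a ≤ f a) : a ≤ nu f :=
  le_sSup h

theorem nu_le (h : ∀ b, b ≤ f b → b ≤ a) : nu f ≤ a :=
  sSup_le h

theorem map_nu (hf : Monotone f) : f (nu f) = nu f :=
  OrderHom.map_gfp ⟨f, hf⟩

theorem le_nu_of_le_map_sup_nu (hf : Monotone f) (h : a ≤ f (a ⊔ nu f)) : a ≤ nu f := by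
  have nu_le_map : nu f ≤ f (a ⊔ nu f) := (map_nu hf).ge.trans (hf le_sup_right)
  exact le_sup_left.trans (le_nu (sup_le h nu_le_map))

end FixedPoints

theorem flip_reflTransGen {α : Type*} (r : α → α → Prop) :
    flip (ReflTransGen r) = ReflTransGen (flip r) :=
  funext₂ fun _ _ => propext reflTransGen_swap.symm

section Terms

variable {F X : Type} (ar : F → ℕ)

theorem lift_mono : Monotone (lift ar X) := by
  rintro R S hRS s t (rfl | ⟨f, sa, ta, hs, ht, hst⟩)
  · exact Or.inl rfl
  · exact Or.inr ⟨f, sa, ta, hs, ht, fun i => hRS _ _ (hst i)⟩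

theorem flip_lift_le (R : Tm ar X → Tm ar X → Prop) :
    flip (lift ar X R) ≤ lift ar X (flip R) := by
  rintro s t (rfl | ⟨f, ta, sa, ht, hs, hts⟩)
  · exact Or.inl rfl
  · exact Or.inr ⟨f, sa, ta, hs, ht, hts⟩

variable (root : Tm ar X → Tm ar X → Prop)

/-- The single steps `→ε⁻¹ ∪ →ε ∪ ↓R` of infinitary equational reasoning, as a function of the
relation `R` allowed below the root; `=^∞` is `νR.(eqStep R)*`. -/
def eqStep (R : Tm ar X → Tm ar X → Prop) : Tm ar X → Tm ar X → Prop :=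
  flip root ⊔ root ⊔ lift ar X R

theorem eqStep_mono : Monotone (eqStep ar root) := fun _ _ hRS =>
  sup_le_sup_left (lift_mono ar hRS) _

theorem flip_eqStep_le (R : Tm ar X → Tm ar X → Prop) :
    flip (eqStep ar root R) ≤ eqStep ar root (flip R) := by
  rintro s t ((hts | hts) | hts)
  · exact Or.inl (Or.inr hts)
  · exact Or.inl (Or.inl hts)
  · exact Or.inr (flip_lift_le ar R s t hts)

theorem reflTransGen_eqStep_mono : Monotone fun R => ReflTransGen (eqStep ar root R) :=
  fun _ _ hRS => ReflTransGen.mono (eqStep_mono ar root hRS)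

theorem reflTransGen_eqStep_eqInf :
    ReflTransGen (eqStep ar root (eqInf ar root)) = eqInf ar root :=
  map_nu (reflTransGen_eqStep_mono ar root)

theorem flip_eqInf_le : flip (eqInf ar root) ≤ eqInf ar root := by
  refine le_nu (f := fun R => ReflTransGen (eqStep ar root R)) ?_
  calc flip (eqInf ar root)
      = flip (ReflTransGen (eqStep ar root (eqInf ar root))) := by
        rw [reflTransGen_eqStep_eqInf]
    _ = ReflTransGen (flip (eqStep ar root (eqInf ar root))) := flip_reflTransGen _
    _ ≤ ReflTransGen (eqStep ar root (flip (eqInf ar root))) :=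
        ReflTransGen.mono (flip_eqStep_le ar root _)

theorem equivalence_eqInf : Equivalence (eqInf ar root) where
  refl s := (reflTransGen_eqStep_eqInf ar root).le s s ReflTransGen.refl
  symm {s t} hst := flip_eqInf_le ar root t s hst
  trans {s t u} hst htu := by
    rw [← reflTransGen_eqStep_eqInf] at hst htu ⊢
    exact hst.trans htu

theorem comp_reflTransGen_lift_le (R S : Tm ar X → Tm ar X → Prop) :
    Relation.Comp (ReflTransGen (root ⊔ lift ar X R)) (lift ar X S) ≤
      ReflTransGen (eqStep ar root (S ⊔ R)) := by
  have front_steps_le : root ⊔ lift ar X R ≤ eqStep ar root (S ⊔ R) :=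
    sup_le_sup le_sup_right (lift_mono ar le_sup_right)
  have last_step_le : lift ar X S ≤ eqStep ar root (S ⊔ R) :=
    (lift_mono ar le_sup_left).trans le_sup_right
  rintro s t ⟨u, hsu, hut⟩
  exact (ReflTransGen.mono front_steps_le s u hsu).tail (last_step_le u t hut)

theorem ired_le_eqInf : ired ar root ≤ eqInf ar root := by
  refine mu_le (nu_le fun N hN => ?_)
  exact le_nu_of_le_map_sup_nu (reflTransGen_eqStep_mono ar root)
    (hN.trans (comp_reflTransGen_lift_le ar root (eqInf ar root) N))

end Terms

/-- Infinitary conversion is contained in infinitary equational reasoning: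
`((→→→)⁻¹ ∘ →→→)* ⊆ =^∞`. -/
theorem conversion_le_eqInf {F X : Type} (ar : F → ℕ)
    (root : Tm ar X → Tm ar X → Prop) :
    ReflTransGen (Relation.Comp (flip (ired ar root)) (ired ar root)) ≤
      eqInf ar root := by
  refine reflTransGen_le_of_equivalence_of_le (equivalence_eqInf ar root) ?_
  rintro s t ⟨u, hus, hut⟩
  have su : eqInf ar root s u := (equivalence_eqInf ar root).symm (ired_le_eqInf ar root u s hus)
  have ut : eqInf ar root u t := ired_le_eqInf ar root u t hut
  exact (equivalence_eqInf ar root).trans su ut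
end
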